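/- For every ρ₀ ∈ ℝ and C₀ > 0 there exists a constant C > 0, depending only on d, T, ρ₀ and C₀, such that all admissible functions u, v satisfying, for every (x,t) ∈ Q, the pointwise inequalities |∂_t u + Δu| ≤ C₀(|u| + |∇u| + |v|) and |∂_t v − Δv − ρ₀ Δu| ≤ C₀(|u| + |v| + |∇u| + |∇v|) obey the global Lipschitz stability estimate ‖u‖_{H^{2,1}(Q)} + ‖v‖_{H^{2,1}(Q)} ≤ C ( ‖u(·,T)‖_{H¹(ℝ^d)} + ‖∇v(·,0)‖_{L²(ℝ^d)} + ‖v(·,T)‖_{L²(ℝ^d)} ). -/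

import Mathlib

open MeasureTheory Real Set

noncomputable section

/-- Spatial partial derivative of `f` in the `i`-th coordinate direction. -/
def spd {d : ℕ} (i : Fin d) (f : (Fin d → ℝ) → ℝ) (x : Fin d → ℝ) : ℝ :=
  fderiv ℝ f x (Pi.single i 1)

/-- Time derivative `∂_t u`. -/
def tder {d : ℕ} (u : (Fin d → ℝ) → ℝ → ℝ) (x : Fin d → ℝ) (t : ℝ) : ℝ :=
  deriv (u x) t

/-- Squared norm of the spatial gradient, `|∇u|²`. -/
def grad2 {d : ℕ} (u : (Fin d → ℝ) → ℝ → ℝ) (x : Fin d → ℝ) (t : ℝ) : ℝ :=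
  ∑ i : Fin d, (spd i (fun y => u y t) x) ^ 2

/-- Norm of the spatial gradient, `|∇u|`. -/
def gradNorm {d : ℕ} (u : (Fin d → ℝ) → ℝ → ℝ) (x : Fin d → ℝ) (t : ℝ) : ℝ :=
  Real.sqrt (grad2 u x t)

/-- Second spatial partial derivative `∂_i ∂_j u`. -/
def pdij {d : ℕ} (i j : Fin d) (u : (Fin d → ℝ) → ℝ → ℝ) (x : Fin d → ℝ) (t : ℝ) : ℝ :=
  spd i (fun y => spd j (fun z => u z t) y) x

/-- Spatial Laplacian `Δu`. -/
def lap {d : ℕ} (u : (Fin d → ℝ) → ℝ → ℝ) (x : Fin d → ℝ) (t : ℝ) : ℝ :=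
  ∑ i : Fin d, pdij i i u x t

/-- `Σ_{i,j=1}^d |∂_i∂_j u|²`. -/
def hess2 {d : ℕ} (u : (Fin d → ℝ) → ℝ → ℝ) (x : Fin d → ℝ) (t : ℝ) : ℝ :=
  ∑ i : Fin d, ∑ j : Fin d, (pdij i j u x t) ^ 2

/-- `u : ℝ^d × ℝ → ℝ` is admissible: `C^∞` and spatially compactly supported,
uniformly for `t ∈ [0,T]`. -/
def Admissible {d : ℕ} (T : ℝ) (u : (Fin d → ℝ) → ℝ → ℝ) : Prop :=
  ContDiff ℝ (⊤ : ℕ∞) (fun p : (Fin d → ℝ) × ℝ => u p.1 p.2) ∧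
  ∃ K₀ : Set (Fin d → ℝ), IsCompact K₀ ∧
    ∀ x t, x ∉ K₀ → t ∈ Set.Icc (0 : ℝ) T → u x t = 0

end

/-!
The argument is a Carleman estimate carried out on an energy identity. For `∂_t w + L w = f` with
`L` symmetric, put `φ = e^{λ t}`, `a = λ φ` and `E = a ‖w‖² - ⟪w, L w⟫`. Then the derivative of
`e^{2φ} E` equals `e^{2φ} (λ² φ ‖w‖² + 2 ‖a w - L w‖² + 2 ⟪a w - L w, f⟫)`, which dominates the
parabolic norm of `w` up to `‖f‖²`. The same identity serves the backward equation, with `L = Δ`,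
and the forward equation, with `L = -Δ`.

Weighting the backward energy by `2 ρ₀² + 1` absorbs the coupling term `ρ₀ Δu`, and a large `λ`
absorbs the lower order terms. Integration in time leaves only the values of the energies at `0` and
`T`. In the forward energy `‖∇v‖²` carries the opposite sign, so `∇v` is needed at time `0`, and at
time `T` only `v` itself.
-/

section Inequalities

theorem norm_add_sq_le_two_mul {E : Type*} [SeminormedAddGroup E] (x y : E) :
    ‖x + y‖ ^ 2 ≤ 2 * (‖x‖ ^ 2 + ‖y‖ ^ 2) :=
  (pow_le_pow_left₀ (norm_nonneg _) (norm_add_le x y) 2).trans add_sq_le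

theorem norm_sub_sq_le_two_mul {E : Type*} [SeminormedAddGroup E] (x y : E) :
    ‖x - y‖ ^ 2 ≤ 2 * (‖x‖ ^ 2 + ‖y‖ ^ 2) :=
  (pow_le_pow_left₀ (norm_nonneg _) (norm_sub_le x y) 2).trans add_sq_le

theorem sq_le_of_abs_le_mul_add_add {r C a b c : ℝ} (h : |r| ≤ C * (a + b + c)) :
    r ^ 2 ≤ 3 * C ^ 2 * (a ^ 2 + b ^ 2 + c ^ 2) := by
  have hr : r ^ 2 ≤ (C * (a + b + c)) ^ 2 := sq_le_sq' (neg_le_of_abs_le h) (le_of_abs_le h)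
  have hsum : (a + b + c) ^ 2 ≤ 3 * (a ^ 2 + b ^ 2 + c ^ 2) := by
    simpa [Fin.sum_univ_three] using
      sq_sum_le_card_mul_sum_sq (s := Finset.univ) (f := ![a, b, c])
  linarith [mul_le_mul_of_nonneg_left hsum (sq_nonneg C)]

theorem sq_le_of_abs_le_mul_add_add_add {r C a b c e : ℝ} (h : |r| ≤ C * (a + b + c + e)) :
    r ^ 2 ≤ 4 * C ^ 2 * (a ^ 2 + b ^ 2 + c ^ 2 + e ^ 2) := by
  have hr : r ^ 2 ≤ (C * (a + b + c + e)) ^ 2 := sq_le_sq' (neg_le_of_abs_le h) (le_of_abs_le h)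
  have hsum : (a + b + c + e) ^ 2 ≤ 4 * (a ^ 2 + b ^ 2 + c ^ 2 + e ^ 2) := by
    simpa [Fin.sum_univ_four] using
      sq_sum_le_card_mul_sum_sq (s := Finset.univ) (f := ![a, b, c, e])
  linarith [mul_le_mul_of_nonneg_left hsum (sq_nonneg C)]

theorem sqrt_add_le_add_sqrt (x y : ℝ) : √(x + y) ≤ √x + √y := by
  have hle (z : ℝ) : z ≤ √z ^ 2 := Real.sq_sqrt'.ge.trans' (le_max_left z 0)
  refine Real.sqrt_le_left (by positivity) |>.2 ?_
  linarith [hle x, hle y, mul_nonneg (Real.sqrt_nonneg x) (Real.sqrt_nonneg y)]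

theorem sqrt_add_sqrt_le {a b A x y z : ℝ} (ha : 0 ≤ a) (hb : 0 ≤ b) (hA : 0 ≤ A)
    (h : a + b ≤ A * (x + y + z)) : √a + √b ≤ 2 * √A * (√x + √y + √z) := by
  have hxyz : √(x + y + z) ≤ √x + √y + √z :=
    (sqrt_add_le_add_sqrt _ _).trans (by gcongr; exact sqrt_add_le_add_sqrt x y)
  calc √a + √b ≤ √(A * (x + y + z)) + √(A * (x + y + z)) := by gcongr <;> linarith
    _ = 2 * √A * √(x + y + z) := by rw [Real.sqrt_mul hA]; ring
    _ ≤ 2 * √A * (√x + √y + √z) := by gcongr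

end Inequalities

section AdmissibleFunctions

open scoped ContDiff

theorem fderiv_fderiv_apply_comm {E F : Type*} [NormedAddCommGroup E] [NormedSpace ℝ E]
    [NormedAddCommGroup F] [NormedSpace ℝ F] {f : E → F} {p : E} (hf : ContDiffAt ℝ 2 f p)
    (v w : E) :
    fderiv ℝ (fun q => fderiv ℝ f q v) p w = fderiv ℝ (fun q => fderiv ℝ f q w) p v := by
  have hdiff : DifferentiableAt ℝ (fderiv ℝ f) p :=
    (hf.fderiv_right (m := 1) (by norm_num)).differentiableAt one_ne_zero
  have hsymm : IsSymmSndFDerivAt ℝ f p := hf.isSymmSndFDerivAt (by simp)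
  simpa [fderiv_clm_apply hdiff (differentiableAt_const _)] using hsymm w v

variable {d : ℕ} {T t : ℝ} {u v : (Fin d → ℝ) → ℝ → ℝ}

/-- The spatial partial derivative `∂_i u` of a function of `(x, t)`. In contrast to `spd`, it is
again a function of `(x, t)`, so that `pdij i j u` is definitionally `pd i (pd j u)`. -/
noncomputable def pd (i : Fin d) (u : (Fin d → ℝ) → ℝ → ℝ) (x : Fin d → ℝ) (t : ℝ) : ℝ :=
  spd i (fun y => u y t) x

theorem uncurry_pd (hu : Differentiable ℝ (Function.uncurry u)) (i : Fin d) :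
    Function.uncurry (pd i u) = fun p => fderiv ℝ (Function.uncurry u) p (Pi.single i 1, 0) := by
  ext ⟨x, t⟩
  have hinl : HasFDerivAt (fun y : Fin d → ℝ => (y, t)) (.inl ℝ (Fin d → ℝ) ℝ) x :=
    hasFDerivAt_prodMk_left x t
  have h := (hu (x, t)).hasFDerivAt.comp x hinl
  change fderiv ℝ (Function.uncurry u ∘ fun y => (y, t)) x (Pi.single i 1) = _
  simp [h.fderiv]

theorem uncurry_tder (hu : Differentiable ℝ (Function.uncurry u)) :
    Function.uncurry (tder u) = fun p => fderiv ℝ (Function.uncurry u) p (0, 1) := by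
  ext ⟨x, t⟩
  have h := ((hu (x, t)).hasFDerivAt.comp t (hasFDerivAt_prodMk_right x t)).hasDerivAt
  change deriv (Function.uncurry u ∘ fun s => (x, s)) t = _
  simp [h.deriv]

namespace Admissible

protected theorem contDiff (hu : Admissible T u) : ContDiff ℝ ∞ (Function.uncurry u) := hu.1

protected theorem differentiable (hu : Admissible T u) :
    Differentiable ℝ (Function.uncurry u) :=
  hu.contDiff.differentiable (by simp)

theorem contDiff_slice (hu : Admissible T u) (t : ℝ) : ContDiff ℝ ∞ (fun x => u x t) :=
  hu.contDiff.comp (contDiff_prodMk_left t)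

theorem hasDerivAt (hu : Admissible T u) (x : Fin d → ℝ) (t : ℝ) :
    HasDerivAt (u x) (tder u x t) t :=
  ((hu.contDiff.comp (contDiff_prodMk_right x)).differentiable (by simp) t).hasDerivAt

protected theorem add (hu : Admissible T u) (hv : Admissible T v) :
    Admissible T (fun x t => u x t + v x t) := by
  obtain ⟨su, K, hK, hu0⟩ := hu
  obtain ⟨sv, L, hL, hv0⟩ := hv
  refine ⟨su.add sv, K ∪ L, hK.union hL, fun x t hx ht => ?_⟩
  rw [mem_union, not_or] at hx
  simp [hu0 x t hx.1 ht, hv0 x t hx.2 ht]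

protected theorem const_mul (c : ℝ) (hu : Admissible T u) :
    Admissible T (fun x t => c * u x t) := by
  obtain ⟨su, K, hK, hu0⟩ := hu
  exact ⟨contDiff_const.mul su, K, hK, fun x t hx ht => by simp [hu0 x t hx ht]⟩

protected theorem sub (hu : Admissible T u) (hv : Admissible T v) :
    Admissible T (fun x t => u x t - v x t) := by
  simpa [sub_eq_add_neg] using hu.add (hv.const_mul (-1))

protected theorem mul (hu : Admissible T u) (hv : Admissible T v) :
    Admissible T (fun x t => u x t * v x t) := by
  obtain ⟨su, K, hK, hu0⟩ := hu
  exact ⟨su.mul hv.contDiff, K, hK, fun x t hx ht => by simp [hu0 x t hx ht]⟩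

protected theorem sq (hu : Admissible T u) : Admissible T (fun x t => u x t ^ 2) := by
  simpa only [sq] using hu.mul hu

protected theorem sum {ι : Type*} [Fintype ι] {f : ι → (Fin d → ℝ) → ℝ → ℝ}
    (hf : ∀ i, Admissible T (f i)) : Admissible T (fun x t => ∑ i, f i x t) := by
  choose K hK hf0 using fun i => (hf i).2
  refine ⟨ContDiff.sum fun i _ => (hf i).contDiff, ⋃ i, K i, isCompact_iUnion hK,
    fun x t hx ht => Finset.sum_eq_zero fun i _ => hf0 i x t ?_ ht⟩
  exact fun hxi => hx (mem_iUnion_of_mem i hxi)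

protected theorem pd (hu : Admissible T u) (i : Fin d) : Admissible T (pd i u) := by
  obtain ⟨K, hK, hu0⟩ := hu.2
  refine ⟨?_, K, hK, fun x t hx ht => ?_⟩
  · change ContDiff ℝ ∞ (Function.uncurry (pd i u))
    rw [uncurry_pd hu.differentiable]
    exact (hu.contDiff.fderiv_right (by simp)).clm_apply contDiff_const
  · have hzero : (fun y => u y t) =ᶠ[nhds x] fun _ => 0 := by
      filter_upwards [hK.isClosed.isOpen_compl.mem_nhds hx] with y hy
      exact hu0 y t hy ht
    simp [pd, spd, hzero.fderiv_eq]

protected theorem tder (hT : 0 < T) (hu : Admissible T u) : Admissible T (tder u) := by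
  obtain ⟨K, hK, hu0⟩ := hu.2
  refine ⟨?_, K, hK, fun x t hx ht => ?_⟩
  · change ContDiff ℝ ∞ (Function.uncurry (tder u))
    rw [uncurry_tder hu.differentiable]
    exact (hu.contDiff.fderiv_right (by simp)).clm_apply contDiff_const
  · have hwithin : derivWithin (u x) (Icc 0 T) t = 0 := by
      rw [derivWithin_congr (fun s hs => hu0 x s hx hs) (hu0 x t hx ht), derivWithin_fun_const,
        Pi.zero_apply]
    rwa [(hu.hasDerivAt x t).differentiableAt.derivWithin (uniqueDiffOn_Icc hT t ht)] at hwithin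

protected theorem lap (hu : Admissible T u) : Admissible T (lap u) :=
  .sum fun i => (hu.pd i).pd i

protected theorem grad2 (hu : Admissible T u) : Admissible T (grad2 u) :=
  .sum fun i => (hu.pd i).sq

protected theorem hess2 (hu : Admissible T u) : Admissible T (hess2 u) :=
  .sum fun i => .sum fun j => ((hu.pd j).pd i).sq

theorem pd_comm (hu : Admissible T u) (i j : Fin d) : pd i (pd j u) = pd j (pd i u) := by
  ext x t
  change Function.uncurry (pd i (pd j u)) (x, t)
    = Function.uncurry (pd j (pd i u)) (x, t)
  simp only [uncurry_pd (hu.pd _).differentiable, uncurry_pd hu.differentiable]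
  exact fderiv_fderiv_apply_comm (hu.contDiff.contDiffAt.of_le (by norm_cast)) _ _

theorem tder_pd (hT : 0 < T) (hu : Admissible T u) (i : Fin d) :
    tder (pd i u) = pd i (tder u) := by
  ext x t
  change Function.uncurry (tder (pd i u)) (x, t)
    = Function.uncurry (pd i (tder u)) (x, t)
  rw [uncurry_tder (hu.pd i).differentiable, uncurry_pd (hu.tder hT).differentiable,
    uncurry_pd hu.differentiable, uncurry_tder hu.differentiable]
  exact fderiv_fderiv_apply_comm (hu.contDiff.contDiffAt.of_le (by norm_cast)) _ _

theorem hasCompactSupport (hu : Admissible T u) (ht : t ∈ Icc 0 T) :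
    HasCompactSupport (fun x => u x t) := by
  obtain ⟨K, hK, hu0⟩ := hu.2
  exact .intro hK fun x hx => hu0 x t hx ht

theorem integrable (hu : Admissible T u) (ht : t ∈ Icc 0 T) : Integrable (fun x => u x t) :=
  (hu.contDiff_slice t).continuous.integrable_of_hasCompactSupport (hu.hasCompactSupport ht)

theorem continuousOn_integral (hu : Admissible T u) :
    ContinuousOn (fun t => ∫ x, u x t) (Icc 0 T) := by
  obtain ⟨K, hK, hu0⟩ := hu.2
  exact continuousOn_integral_of_compact_support hK
    (hu.contDiff.continuous.comp continuous_swap).continuousOn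
    fun t x ht hx => hu0 x t hx ht

theorem hasDerivAt_integral (hu : Admissible T u) (ht : t ∈ Ioo 0 T) :
    HasDerivAt (fun t => ∫ x, u x t) (∫ x, tder u x t) t := by
  have hu' := hu.tder (ht.1.trans ht.2)
  obtain ⟨K, hK, hu'0⟩ := hu'.2
  obtain ⟨M, hM⟩ := (hK.prod (isCompact_Icc (a := (0 : ℝ)) (b := T))).exists_bound_of_continuousOn
    hu'.contDiff.continuous.continuousOn
  have hbound : ∀ x, ∀ s ∈ Ioo 0 T, ‖tder u x s‖ ≤ K.indicator (fun _ => M) x := by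
    intro x s hs
    by_cases hx : x ∈ K
    · simpa [hx] using hM (x, s) ⟨hx, Ioo_subset_Icc_self hs⟩
    · simp [hx, hu'0 x s hx (Ioo_subset_Icc_self hs)]
  exact (hasDerivAt_integral_of_dominated_loc_of_deriv_le (Ioo_mem_nhds ht.1 ht.2)
    (.of_forall fun s => (hu.contDiff_slice s).continuous.aestronglyMeasurable)
    (hu.integrable (Ioo_subset_Icc_self ht))
    (hu'.contDiff_slice t).continuous.aestronglyMeasurable
    (.of_forall hbound)
    ((integrable_indicator_iff hK.measurableSet).2 (integrableOn_const hK.measure_ne_top))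
    (.of_forall fun x s _ => hu.hasDerivAt x s)).2

theorem integral_mul_pd (hu : Admissible T u) (hv : Admissible T v) (ht : t ∈ Icc 0 T)
    (i : Fin d) : ∫ x, u x t * pd i v x t = -∫ x, pd i u x t * v x t :=
  integral_mul_fderiv_eq_neg_fderiv_mul_of_integrable
    (((hu.pd i).mul hv).integrable ht) ((hu.mul (hv.pd i)).integrable ht)
    ((hu.mul hv).integrable ht)
    (fun x _ => (hu.contDiff_slice t).differentiable (by simp) x)
    (fun x _ => (hv.contDiff_slice t).differentiable (by simp) x)

theorem integral_sum_pd_mul_pd (hu : Admissible T u) (hv : Admissible T v)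
    (ht : t ∈ Icc 0 T) :
    ∫ x, ∑ i, pd i u x t * pd i v x t = -∫ x, lap u x t * v x t := by
  have hlap : ∀ x, lap u x t * v x t = ∑ i, pd i (pd i u) x t * v x t :=
    fun x => Finset.sum_mul ..
  simp only [hlap]
  rw [integral_finsetSum _ fun i _ => ((hu.pd i).mul (hv.pd i)).integrable ht,
    integral_finsetSum _ fun i _ => (((hu.pd i).pd i).mul hv).integrable ht,
    ← Finset.sum_neg_distrib]
  exact Finset.sum_congr rfl fun i _ => (hu.pd i).integral_mul_pd hv ht i

theorem integral_grad2 (hu : Admissible T u) (ht : t ∈ Icc 0 T) :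
    ∫ x, grad2 u x t = -∫ x, lap u x t * u x t := by
  rw [← hu.integral_sum_pd_mul_pd hu ht]
  simp only [grad2, pd, sq]

theorem integral_hess2 (hu : Admissible T u) (ht : t ∈ Icc 0 T) :
    ∫ x, hess2 u x t = ∫ x, lap u x t ^ 2 := by
  have hint : ∀ i j k l, Integrable fun x => pd i (pd j u) x t * pd k (pd l u) x t :=
    fun i j k l => (((hu.pd j).pd i).mul ((hu.pd l).pd k)).integrable ht
  have hswap : ∀ i j, ∫ x, pd i (pd j u) x t * pd i (pd j u) x t
      = ∫ x, pd i (pd i u) x t * pd j (pd j u) x t := fun i j => by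
    rw [((hu.pd j).pd i).integral_mul_pd (hu.pd j) ht, hu.pd_comm i j, (hu.pd i).pd_comm i j,
      ((hu.pd i).pd i).integral_mul_pd (hu.pd j) ht]
  calc ∫ x, hess2 u x t
      = ∫ x, ∑ i, ∑ j, pd i (pd j u) x t * pd i (pd j u) x t := by
        simp only [hess2, pdij, pd, sq]
    _ = ∑ i, ∑ j, ∫ x, pd i (pd j u) x t * pd i (pd j u) x t := by
        rw [integral_finsetSum _ fun i _ => integrable_finsetSum _ fun j _ => hint i j i j]
        exact Finset.sum_congr rfl fun i _ => integral_finsetSum _ fun j _ => hint i j i j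
    _ = ∑ i, ∑ j, ∫ x, pd i (pd i u) x t * pd j (pd j u) x t := by simp only [hswap]
    _ = ∫ x, ∑ i, ∑ j, pd i (pd i u) x t * pd j (pd j u) x t := by
        rw [integral_finsetSum _ fun i _ => integrable_finsetSum _ fun j _ => hint i i j j]
        exact Finset.sum_congr rfl fun i _ => (integral_finsetSum _ fun j _ => hint i i j j).symm
    _ = ∫ x, lap u x t ^ 2 := by
        simp only [lap, pdij, pd, sq, Finset.sum_mul_sum]

theorem hasDerivAt_integral_sq (hu : Admissible T u) (ht : t ∈ Ioo 0 T) :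
    HasDerivAt (fun t => ∫ x, u x t ^ 2) (2 * ∫ x, u x t * tder u x t) t := by
  have htder : ∀ x, tder (fun x t => u x t ^ 2) x t = 2 * (u x t * tder u x t) :=
    fun x => HasDerivAt.deriv (by simpa [mul_assoc] using (hu.hasDerivAt x t).fun_pow 2)
  simpa only [htder, integral_const_mul] using hu.sq.hasDerivAt_integral ht

theorem hasDerivAt_integral_grad2 (hu : Admissible T u) (ht : t ∈ Ioo 0 T) :
    HasDerivAt (fun t => ∫ x, grad2 u x t) (-(2 * ∫ x, lap u x t * tder u x t)) t := by
  have hT := ht.1.trans ht.2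
  have htder : ∀ x, tder (grad2 u) x t
      = 2 * ∑ i, pd i u x t * pd i (tder u) x t := fun x => by
    have hsum : HasDerivAt (fun s => ∑ i, pd i u x s ^ 2)
        (2 * ∑ i, pd i u x t * pd i (tder u) x t) t := by
      simpa [hu.tder_pd hT, Finset.mul_sum, mul_assoc] using
        HasDerivAt.fun_sum (u := Finset.univ) fun i _ => ((hu.pd i).hasDerivAt x t).fun_pow 2
    exact hsum.deriv
  have h := hu.grad2.hasDerivAt_integral ht
  simpa only [htder, integral_const_mul,
    hu.integral_sum_pd_mul_pd (hu.tder hT) (Ioo_subset_Icc_self ht), mul_neg] using h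

end Admissible

end AdmissibleFunctions

section CarlemanForm

open scoped InnerProductSpace

variable {H : Type*} [NormedAddCommGroup H] [InnerProductSpace ℝ H]

/-- For a curve `w` with derivative `w'` and a symmetric operator `L` applied to it, `U = L w`, the
value of `(∂_t + 2 a) (a ‖w‖² - ⟪w, U⟫)`, where `b` is the derivative of `a`. This is the weighted
derivative `e^{-2A} ∂_t (e^{2A} (a ‖w‖² - ⟪w, U⟫))` of the energy for a weight with `A' = a`. -/
def carlemanForm (a b : ℝ) (w U w' : H) : ℝ :=
  2 * a * (a * ‖w‖ ^ 2 - ⟪w, U⟫_ℝ) + (b * ‖w‖ ^ 2 + 2 * a * ⟪w, w'⟫_ℝ - 2 * ⟪U, w'⟫_ℝ)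

theorem carlemanForm_eq (a b : ℝ) (w U w' : H) :
    carlemanForm a b w U w' =
      b * ‖w‖ ^ 2 + 2 * ‖a • w - U‖ ^ 2 + 2 * ⟪a • w - U, w' + U⟫_ℝ := by
  rw [carlemanForm, norm_sub_sq_real, norm_smul, mul_pow, Real.norm_eq_abs, sq_abs]
  simp only [inner_sub_left, inner_add_right, real_inner_smul_left, real_inner_self_eq_norm_sq]
  ring

theorem norm_smul_sub_sq_le_carlemanForm (a b : ℝ) (w U w' : H) :
    b * ‖w‖ ^ 2 + ‖a • w - U‖ ^ 2 ≤ carlemanForm a b w U w' + ‖w' + U‖ ^ 2 := by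
  have h := norm_add_sq_real (a • w - U) (w' + U)
  rw [carlemanForm_eq]
  linarith [sq_nonneg ‖(a • w - U) + (w' + U)‖]

theorem backward_carleman_estimate (a b : ℝ) (u U u' : H) :
    ‖U‖ ^ 2 + 2 * a * -⟪u, U⟫_ℝ + (a ^ 2 + b) * ‖u‖ ^ 2 ≤
      carlemanForm a b u U u' + ‖u' + U‖ ^ 2 := by
  have h := norm_smul_sub_sq_le_carlemanForm a b u U u'
  rw [norm_sub_sq_real, norm_smul, mul_pow, Real.norm_eq_abs, sq_abs, real_inner_smul_left] at h
  linarith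

theorem forward_carleman_estimate (lam : ℝ) {φ : ℝ} (hφ : 1 ≤ φ) (v V v' : H) :
    ‖V‖ ^ 2 / (4 * φ) + lam / 8 * -⟪v, V⟫_ℝ + lam ^ 2 * φ / 4 * ‖v‖ ^ 2 ≤
      carlemanForm (lam * φ) (lam ^ 2 * φ) v (-V) v' + ‖v' - V‖ ^ 2 := by
  obtain ⟨Z, rfl⟩ : ∃ Z, V = Z - (lam * φ) • v := ⟨V + (lam * φ) • v, by simp⟩
  have hform := norm_smul_sub_sq_le_carlemanForm (lam * φ) (lam ^ 2 * φ) v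
    (-(Z - (lam * φ) • v)) v'
  have hV : ‖Z - (lam * φ) • v‖ ^ 2 / (4 * φ) ≤ ‖Z‖ ^ 2 / 2 + lam ^ 2 * φ / 2 * ‖v‖ ^ 2 := by
    have hsq := norm_sub_sq_le_two_mul Z ((lam * φ) • v)
    rw [norm_smul, mul_pow, Real.norm_eq_abs, sq_abs] at hsq
    rw [div_le_iff₀ (by positivity)]
    linarith [mul_nonneg (sub_nonneg.2 hφ) (sq_nonneg ‖Z‖)]
  have hinner : -(lam * ⟪v, Z⟫_ℝ) ≤ 4 * ‖Z‖ ^ 2 + lam ^ 2 / 16 * ‖v‖ ^ 2 := by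
    have h := norm_add_sq_real ((lam / 4) • v) ((2 : ℝ) • Z)
    simp only [norm_smul, mul_pow, Real.norm_eq_abs, sq_abs, real_inner_smul_left,
      real_inner_smul_right] at h
    linarith [sq_nonneg ‖(lam / 4) • v + (2 : ℝ) • Z‖]
  have hlamv : 0 ≤ lam ^ 2 * ‖v‖ ^ 2 := by positivity
  have hlamφv := mul_nonneg (sub_nonneg.2 hφ) hlamv
  rw [inner_sub_right, real_inner_smul_right, real_inner_self_eq_norm_sq]
  rw [sub_neg_eq_add, add_sub_cancel, ← sub_eq_add_neg] at hform
  linarith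

/-- The square `‖w‖² + ⟪w, -L w⟫ + ‖L w‖² + ‖w'‖²` of the parabolic graph norm, where `U = L w`. -/
def graphNormSq (w U w' : H) : ℝ := ‖w‖ ^ 2 + -⟪w, U⟫_ℝ + ‖U‖ ^ 2 + ‖w'‖ ^ 2

/-- The weight of the backward equation relative to the forward one, large enough for the backward
estimate to absorb the coupling term `ρ L u` of the forward equation. -/
def couplingWeight (ρ : ℝ) : ℝ := 2 * ρ ^ 2 + 1

/-- A bound for the lower order terms with constant `C` of the two equations, weighted by
`couplingWeight`. -/
def lowerOrderBound (ρ C : ℝ) : ℝ := 8 * C ^ 2 + 3 * couplingWeight ρ * C ^ 2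

/-- The rate `λ` of the Carleman weight `exp (2 exp (λ t))`, large enough to absorb the lower order
terms. -/
def carlemanRate (ρ C : ℝ) : ℝ := 8 * (lowerOrderBound ρ C + 1)

theorem one_le_couplingWeight (ρ : ℝ) : 1 ≤ couplingWeight ρ := by
  unfold couplingWeight
  linarith [sq_nonneg ρ]

theorem lowerOrderBound_nonneg (ρ C : ℝ) : 0 ≤ lowerOrderBound ρ C := by
  have := one_le_couplingWeight ρ
  unfold lowerOrderBound
  positivity

theorem one_le_carlemanRate (ρ C : ℝ) : 1 ≤ carlemanRate ρ C := by
  unfold carlemanRate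
  linarith [lowerOrderBound_nonneg ρ C]

theorem lowerOrderBound_add_one_le {κ φ : ℝ} (hκ : 1 ≤ κ) (hφ : 1 ≤ φ) (ρ C : ℝ) :
    lowerOrderBound ρ C + 1 ≤ κ * (2 * (carlemanRate ρ C * φ)) ∧
    lowerOrderBound ρ C + 1 ≤
      κ * ((carlemanRate ρ C * φ) ^ 2 + carlemanRate ρ C ^ 2 * φ) ∧
    lowerOrderBound ρ C + 1 ≤ carlemanRate ρ C ^ 2 * φ / 4 := by
  have hM := lowerOrderBound_nonneg ρ C
  have hκφ : 1 ≤ κ * φ := one_le_mul_of_one_le_of_one_le hκ hφ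
  unfold carlemanRate
  refine ⟨?_, ?_, ?_⟩
  · nlinarith
  · nlinarith [mul_nonneg (zero_le_one.trans hκ) (sq_nonneg ((lowerOrderBound ρ C + 1) * φ))]
  · nlinarith

section Coupled

/-- The linearized mean field game inequalities at one instant, in a Hilbert space with a symmetric
nonpositive operator `L` in place of the Laplacian: `U = L u`, `V = L v`, and `u'`, `v'` are the
time derivatives. Since `‖∇u‖² = ⟪u, -L u⟫`, the gradients enter through `-⟪u, U⟫` and
`-⟪v, V⟫`; the factors `3` and `4` come from squaring sums of three and four terms. -/
structure AbstractMFGInequalities (ρ C : ℝ) (u U u' v V v' : H) : Prop where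
  inner_left_nonpos : ⟪u, U⟫_ℝ ≤ 0
  inner_right_nonpos : ⟪v, V⟫_ℝ ≤ 0
  backward : ‖u' + U‖ ^ 2 ≤ 3 * C ^ 2 * (‖u‖ ^ 2 + -⟪u, U⟫_ℝ + ‖v‖ ^ 2)
  forward : ‖v' - V - ρ • U‖ ^ 2 ≤
    4 * C ^ 2 * (‖u‖ ^ 2 + ‖v‖ ^ 2 + -⟪u, U⟫_ℝ + -⟪v, V⟫_ℝ)

variable {ρ C φ : ℝ} {u U u' v V v' : H}

namespace AbstractMFGInequalities

theorem weighted_residual_le (h : AbstractMFGInequalities ρ C u U u' v V v') :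
    couplingWeight ρ * ‖u' + U‖ ^ 2 + ‖v' - V‖ ^ 2 ≤ 2 * ρ ^ 2 * ‖U‖ ^ 2 +
      lowerOrderBound ρ C * (‖u‖ ^ 2 + ‖v‖ ^ 2 + -⟪u, U⟫_ℝ + -⟪v, V⟫_ℝ) := by
  have hcoupling := norm_add_sq_le_two_mul (v' - V - ρ • U) (ρ • U)
  rw [sub_add_cancel, norm_smul, mul_pow, Real.norm_eq_abs, sq_abs] at hcoupling
  have hκ := zero_le_one.trans (one_le_couplingWeight ρ)
  have hκF := mul_le_mul_of_nonneg_left h.backward hκ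
  have hκv := mul_nonneg (mul_nonneg hκ (sq_nonneg C)) (neg_nonneg.2 h.inner_right_nonpos)
  have hG := h.forward
  unfold lowerOrderBound
  linarith

theorem coupled_carleman_estimate (h : AbstractMFGInequalities ρ C u U u' v V v')
    (hφ : 1 ≤ φ) :
    ‖u‖ ^ 2 + -⟪u, U⟫_ℝ + ‖U‖ ^ 2 + ‖v‖ ^ 2 + -⟪v, V⟫_ℝ + ‖V‖ ^ 2 / (4 * φ) ≤
      couplingWeight ρ *
          carlemanForm (carlemanRate ρ C * φ) (carlemanRate ρ C ^ 2 * φ) u U u' +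
        carlemanForm (carlemanRate ρ C * φ) (carlemanRate ρ C ^ 2 * φ) v (-V) v' := by
  have hκ := one_le_couplingWeight ρ
  have hbackward := mul_le_mul_of_nonneg_left (backward_carleman_estimate (carlemanRate ρ C * φ)
    (carlemanRate ρ C ^ 2 * φ) u U u') (zero_le_one.trans hκ)
  have hforward := forward_carleman_estimate (carlemanRate ρ C) hφ v V v'
  have hresidual := h.weighted_residual_le
  have hκU : couplingWeight ρ * ‖U‖ ^ 2 = ‖U‖ ^ 2 + 2 * ρ ^ 2 * ‖U‖ ^ 2 := by
    unfold couplingWeight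
    ring
  have hrate : carlemanRate ρ C / 8 = lowerOrderBound ρ C + 1 := by
    unfold carlemanRate
    ring
  obtain ⟨hgrad, husq, hvsq⟩ := lowerOrderBound_add_one_le hκ hφ ρ C
  have hu_absorb := mul_le_mul_of_nonneg_right husq (sq_nonneg ‖u‖)
  have hgrad_absorb := mul_le_mul_of_nonneg_right hgrad (neg_nonneg.2 h.inner_left_nonpos)
  have hv_absorb := mul_le_mul_of_nonneg_right hvsq (sq_nonneg ‖v‖)
  rw [hrate] at hforward
  linarith

theorem graphNormSq_add_graphNormSq_le (h : AbstractMFGInequalities ρ C u U u' v V v') :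
    graphNormSq u U u' + graphNormSq v V v' ≤
      (1 + 22 * C ^ 2) * (‖u‖ ^ 2 + -⟪u, U⟫_ℝ + ‖v‖ ^ 2 + -⟪v, V⟫_ℝ)
        + (3 + 4 * ρ ^ 2) * ‖U‖ ^ 2 + 3 * ‖V‖ ^ 2 := by
  have hu' := norm_sub_sq_le_two_mul (u' + U) U
  have hv' := norm_add_sq_le_two_mul (v' - V) V
  have hcoupling := norm_add_sq_le_two_mul (v' - V - ρ • U) (ρ • U)
  rw [add_sub_cancel_right] at hu'
  rw [sub_add_cancel] at hv'
  rw [sub_add_cancel, norm_smul, mul_pow, Real.norm_eq_abs, sq_abs] at hcoupling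
  have hCv := mul_nonneg (sq_nonneg C) (neg_nonneg.2 h.inner_right_nonpos)
  rw [graphNormSq, graphNormSq]
  linarith [h.backward, h.forward]

theorem graphNormSq_add_graphNormSq_le_carlemanForm (h : AbstractMFGInequalities ρ C u U u' v V v')
    (hφ : 1 ≤ φ) :
    graphNormSq u U u' + graphNormSq v V v' ≤ 12 * φ * (1 + 2 * C ^ 2 + ρ ^ 2) *
      (couplingWeight ρ *
          carlemanForm (carlemanRate ρ C * φ) (carlemanRate ρ C ^ 2 * φ) u U u' +
        carlemanForm (carlemanRate ρ C * φ) (carlemanRate ρ C ^ 2 * φ) v (-V) v') := by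
  calc graphNormSq u U u' + graphNormSq v V v'
      ≤ (1 + 22 * C ^ 2) * (‖u‖ ^ 2 + -⟪u, U⟫_ℝ + ‖v‖ ^ 2 + -⟪v, V⟫_ℝ)
          + (3 + 4 * ρ ^ 2) * ‖U‖ ^ 2 + 12 * φ * (‖V‖ ^ 2 / (4 * φ)) := by
        have hV : 12 * φ * (‖V‖ ^ 2 / (4 * φ)) = 3 * ‖V‖ ^ 2 := by field_simp; ring
        rw [hV]
        exact h.graphNormSq_add_graphNormSq_le
    _ ≤ 12 * φ * (1 + 2 * C ^ 2 + ρ ^ 2) *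
        (‖u‖ ^ 2 + -⟪u, U⟫_ℝ + ‖U‖ ^ 2 + ‖v‖ ^ 2 + -⟪v, V⟫_ℝ + ‖V‖ ^ 2 / (4 * φ)) := by
        have hu := neg_nonneg.2 h.inner_left_nonpos
        have hv := neg_nonneg.2 h.inner_right_nonpos
        have hK : 1 + 2 * C ^ 2 + ρ ^ 2 ≤ φ * (1 + 2 * C ^ 2 + ρ ^ 2) :=
          le_mul_of_one_le_left (by positivity) hφ
        have hlow : 1 + 22 * C ^ 2 ≤ 12 * φ * (1 + 2 * C ^ 2 + ρ ^ 2) := by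
          linarith [sq_nonneg C, sq_nonneg ρ]
        have hU : 3 + 4 * ρ ^ 2 ≤ 12 * φ * (1 + 2 * C ^ 2 + ρ ^ 2) := by
          linarith [sq_nonneg C, sq_nonneg ρ]
        have hV : 12 * φ ≤ 12 * φ * (1 + 2 * C ^ 2 + ρ ^ 2) :=
          le_mul_of_one_le_right (by positivity) (by linarith [sq_nonneg C, sq_nonneg ρ])
        calc _ ≤ 12 * φ * (1 + 2 * C ^ 2 + ρ ^ 2) *
                  (‖u‖ ^ 2 + -⟪u, U⟫_ℝ + ‖v‖ ^ 2 + -⟪v, V⟫_ℝ)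
                + 12 * φ * (1 + 2 * C ^ 2 + ρ ^ 2) * ‖U‖ ^ 2
                + 12 * φ * (1 + 2 * C ^ 2 + ρ ^ 2) * (‖V‖ ^ 2 / (4 * φ)) := by gcongr
          _ = _ := by ring
    _ ≤ _ := mul_le_mul_of_nonneg_left (h.coupled_carleman_estimate hφ) (by positivity)

end AbstractMFGInequalities

end Coupled

end CarlemanForm

section Stability

open scoped InnerProductSpace

variable {d : ℕ} {T t : ℝ} {u v : (Fin d → ℝ) → ℝ → ℝ}

theorem grad2_nonneg (u : (Fin d → ℝ) → ℝ → ℝ) (x : Fin d → ℝ) (t : ℝ) : 0 ≤ grad2 u x t :=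
  Finset.sum_nonneg fun _ _ => sq_nonneg _

theorem gradNorm_sq (u : (Fin d → ℝ) → ℝ → ℝ) (x : Fin d → ℝ) (t : ℝ) :
    gradNorm u x t ^ 2 = grad2 u x t :=
  Real.sq_sqrt (grad2_nonneg u x t)

theorem integral_sq_nonneg (u : (Fin d → ℝ) → ℝ → ℝ) (t : ℝ) : 0 ≤ ∫ x, u x t ^ 2 :=
  integral_nonneg fun _ => sq_nonneg _

theorem integral_grad2_nonneg (u : (Fin d → ℝ) → ℝ → ℝ) (t : ℝ) : 0 ≤ ∫ x, grad2 u x t :=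
  integral_nonneg fun x => grad2_nonneg u x t

namespace Admissible

theorem memLp_two (hu : Admissible T u) (ht : t ∈ Icc 0 T) :
    MemLp (fun x => u x t) 2 (volume : Measure (Fin d → ℝ)) :=
  (hu.contDiff_slice t).continuous.memLp_of_hasCompactSupport (hu.hasCompactSupport ht)

/-- The slice `u(·,t)` of an admissible function, as an element of `L²(ℝ^d)`. -/
noncomputable def toL2 (hu : Admissible T u) (ht : t ∈ Icc 0 T) :
    Lp ℝ 2 (volume : Measure (Fin d → ℝ)) :=
  (hu.memLp_two ht).toLp

theorem toL2_add (hu : Admissible T u) (hv : Admissible T v) (ht : t ∈ Icc 0 T) :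
    (hu.add hv).toL2 ht = hu.toL2 ht + hv.toL2 ht :=
  MemLp.toLp_add (hu.memLp_two ht) (hv.memLp_two ht)

theorem toL2_sub (hu : Admissible T u) (hv : Admissible T v) (ht : t ∈ Icc 0 T) :
    (hu.sub hv).toL2 ht = hu.toL2 ht - hv.toL2 ht :=
  MemLp.toLp_sub (hu.memLp_two ht) (hv.memLp_two ht)

theorem toL2_const_mul (c : ℝ) (hu : Admissible T u) (ht : t ∈ Icc 0 T) :
    (hu.const_mul c).toL2 ht = c • hu.toL2 ht :=
  MemLp.toLp_const_smul c (hu.memLp_two ht)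

theorem inner_toL2 (hu : Admissible T u) (hv : Admissible T v) (ht : t ∈ Icc 0 T) :
    ⟪hu.toL2 ht, hv.toL2 ht⟫_ℝ = ∫ x, u x t * v x t := by
  rw [L2.inner_def]
  refine integral_congr_ae ?_
  filter_upwards [(hu.memLp_two ht).coeFn_toLp, (hv.memLp_two ht).coeFn_toLp] with x hux hvx
  simp [toL2, hux, hvx, mul_comm]

theorem norm_toL2_sq (hu : Admissible T u) (ht : t ∈ Icc 0 T) :
    ‖hu.toL2 ht‖ ^ 2 = ∫ x, u x t ^ 2 := by
  rw [← real_inner_self_eq_norm_sq, hu.inner_toL2 hu]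
  simp only [sq]

theorem neg_inner_toL2_lap (hu : Admissible T u) (ht : t ∈ Icc 0 T) :
    -⟪hu.toL2 ht, hu.lap.toL2 ht⟫_ℝ = ∫ x, grad2 u x t := by
  rw [real_inner_comm, hu.lap.inner_toL2 hu, hu.integral_grad2 ht]

theorem inner_toL2_lap_nonpos (hu : Admissible T u) (ht : t ∈ Icc 0 T) :
    ⟪hu.toL2 ht, hu.lap.toL2 ht⟫_ℝ ≤ 0 := by
  rw [← neg_nonneg, hu.neg_inner_toL2_lap ht]
  exact integral_grad2_nonneg u t

end Admissible

/-- The pointwise differential inequalities of the linearized mean field game system, for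
admissible `u` (backward equation) and `v` (forward equation). -/
structure LinearizedMFGInequalities (T ρ C : ℝ) (u v : (Fin d → ℝ) → ℝ → ℝ) : Prop where
  left : Admissible T u
  right : Admissible T v
  backward : ∀ x, ∀ t ∈ Ioo 0 T,
    |tder u x t + lap u x t| ≤ C * (|u x t| + gradNorm u x t + |v x t|)
  forward : ∀ x, ∀ t ∈ Ioo 0 T, |tder v x t - lap v x t - ρ * lap u x t| ≤
    C * (|u x t| + |v x t| + gradNorm u x t + gradNorm v x t)

namespace LinearizedMFGInequalities

variable {ρ C : ℝ}

theorem integral_backward_sq_le (h : LinearizedMFGInequalities T ρ C u v) (ht : t ∈ Ioo 0 T) :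
    ∫ x, (tder u x t + lap u x t) ^ 2 ≤
      3 * C ^ 2 * ((∫ x, u x t ^ 2) + (∫ x, grad2 u x t) + ∫ x, v x t ^ 2) := by
  have ht' := Ioo_subset_Icc_self ht
  have hugrad := h.left.sq.add h.left.grad2
  rw [← integral_add (h.left.sq.integrable ht') (h.left.grad2.integrable ht'),
    ← integral_add (hugrad.integrable ht') (h.right.sq.integrable ht'), ← integral_const_mul]
  refine integral_mono (((h.left.tder (ht.1.trans ht.2)).add h.left.lap).sq.integrable ht')
    (((hugrad.add h.right.sq).const_mul _).integrable ht') fun x => ?_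
  simpa only [sq_abs, gradNorm_sq] using sq_le_of_abs_le_mul_add_add (h.backward x t ht)

theorem integral_forward_sq_le (h : LinearizedMFGInequalities T ρ C u v) (ht : t ∈ Ioo 0 T) :
    ∫ x, (tder v x t - lap v x t - ρ * lap u x t) ^ 2 ≤
      4 * C ^ 2 * ((∫ x, u x t ^ 2) + (∫ x, v x t ^ 2) + (∫ x, grad2 u x t)
        + ∫ x, grad2 v x t) := by
  have ht' := Ioo_subset_Icc_self ht
  have huv := h.left.sq.add h.right.sq
  have huvgrad := huv.add h.left.grad2
  rw [← integral_add (h.left.sq.integrable ht') (h.right.sq.integrable ht'),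
    ← integral_add (huv.integrable ht') (h.left.grad2.integrable ht'),
    ← integral_add (huvgrad.integrable ht') (h.right.grad2.integrable ht'),
    ← integral_const_mul]
  refine integral_mono ((((h.right.tder (ht.1.trans ht.2)).sub h.right.lap).sub
      (h.left.lap.const_mul ρ)).sq.integrable ht')
    (((huvgrad.add h.right.grad2).const_mul _).integrable ht') fun x => ?_
  simpa only [sq_abs, gradNorm_sq] using sq_le_of_abs_le_mul_add_add_add (h.forward x t ht)

theorem toL2 (h : LinearizedMFGInequalities T ρ C u v) (hT : 0 < T) (ht : t ∈ Ioo 0 T) :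
    AbstractMFGInequalities ρ C (h.left.toL2 (Ioo_subset_Icc_self ht))
      (h.left.lap.toL2 (Ioo_subset_Icc_self ht)) ((h.left.tder hT).toL2 (Ioo_subset_Icc_self ht))
      (h.right.toL2 (Ioo_subset_Icc_self ht)) (h.right.lap.toL2 (Ioo_subset_Icc_self ht))
      ((h.right.tder hT).toL2 (Ioo_subset_Icc_self ht)) where
  inner_left_nonpos := h.left.inner_toL2_lap_nonpos _
  inner_right_nonpos := h.right.inner_toL2_lap_nonpos _
  backward := by
    simpa only [← Admissible.toL2_add, Admissible.norm_toL2_sq, Admissible.neg_inner_toL2_lap]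
      using h.integral_backward_sq_le ht
  forward := by
    simpa only [← Admissible.toL2_sub, ← Admissible.toL2_const_mul, Admissible.norm_toL2_sq,
      Admissible.neg_inner_toL2_lap] using h.integral_forward_sq_le ht

end LinearizedMFGInequalities

/-- The density in time of the squared `H^{2,1}` norm, whose integral over `(0,T)` is `‖u‖²`. -/
noncomputable def parabolicNormSq (u : (Fin d → ℝ) → ℝ → ℝ) (t : ℝ) : ℝ :=
  ∫ x, (u x t ^ 2 + grad2 u x t + hess2 u x t + tder u x t ^ 2)

theorem parabolicNormSq_nonneg (u : (Fin d → ℝ) → ℝ → ℝ) (t : ℝ) : 0 ≤ parabolicNormSq u t :=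
  integral_nonneg fun x => by
    have := grad2_nonneg u x t
    have : 0 ≤ hess2 u x t := Finset.sum_nonneg fun _ _ => Finset.sum_nonneg fun _ _ => sq_nonneg _
    positivity

theorem Admissible.parabolicNormSq_eq (hT : 0 < T) (hu : Admissible T u) (ht : t ∈ Icc 0 T) :
    parabolicNormSq u t =
      graphNormSq (hu.toL2 ht) (hu.lap.toL2 ht) ((hu.tder hT).toL2 ht) := by
  rw [graphNormSq, hu.neg_inner_toL2_lap, hu.norm_toL2_sq, hu.lap.norm_toL2_sq,
    (hu.tder hT).norm_toL2_sq, ← hu.integral_hess2 ht, parabolicNormSq,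
    integral_add _ ((hu.tder hT).sq.integrable ht),
    integral_add _ (hu.hess2.integrable ht), integral_add (hu.sq.integrable ht)
      (hu.grad2.integrable ht)]
  · exact (hu.sq.add hu.grad2).integrable ht
  · exact ((hu.sq.add hu.grad2).add hu.hess2).integrable ht

theorem Admissible.continuousOn_parabolicNormSq (hT : 0 < T) (hu : Admissible T u) :
    ContinuousOn (parabolicNormSq u) (Icc 0 T) :=
  (((hu.sq.add hu.grad2).add hu.hess2).add (hu.tder hT).sq).continuousOn_integral

/-- The weighted energy `e^{2φ} (λ φ ‖u‖² + σ ‖∇u‖²)` with `φ = e^{λ t}`; the sign `σ` is `1` for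
the backward and `-1` for the forward equation. -/
noncomputable def carlemanEnergy (lam σ : ℝ) (u : (Fin d → ℝ) → ℝ → ℝ) (t : ℝ) : ℝ :=
  exp (2 * exp (lam * t)) *
    (lam * exp (lam * t) * (∫ x, u x t ^ 2) + σ * ∫ x, grad2 u x t)

theorem Admissible.continuousOn_carlemanEnergy (hu : Admissible T u) (lam σ : ℝ) :
    ContinuousOn (carlemanEnergy lam σ u) (Icc 0 T) := by
  have hsq := hu.sq.continuousOn_integral
  have hgrad := hu.grad2.continuousOn_integral
  unfold carlemanEnergy
  fun_prop

theorem Admissible.hasDerivAt_carlemanEnergy (hT : 0 < T) (hu : Admissible T u) (lam σ : ℝ)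
    (ht : t ∈ Ioo 0 T) :
    HasDerivAt (carlemanEnergy lam σ u)
      (exp (2 * exp (lam * t)) * carlemanForm (lam * exp (lam * t)) (lam ^ 2 * exp (lam * t))
        (hu.toL2 (Ioo_subset_Icc_self ht)) (σ • hu.lap.toL2 (Ioo_subset_Icc_self ht))
        ((hu.tder hT).toL2 (Ioo_subset_Icc_self ht))) t := by
  have ht' := Ioo_subset_Icc_self ht
  have hφ : HasDerivAt (fun s => exp (lam * s)) (lam * exp (lam * t)) t := by
    simpa [mul_comm] using ((hasDerivAt_id t).const_mul lam).exp
  have hderiv := (hφ.const_mul 2).exp.mul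
    (((hφ.const_mul lam).mul (hu.hasDerivAt_integral_sq ht)).add
      ((hu.hasDerivAt_integral_grad2 ht).const_mul σ))
  refine hderiv.congr_deriv ?_
  rw [carlemanForm, real_inner_smul_left, real_inner_smul_right, hu.norm_toL2_sq,
    hu.inner_toL2 (hu.tder hT), hu.lap.inner_toL2 (hu.tder hT)]
  simp only [Pi.mul_apply, Pi.add_apply, ← hu.neg_inner_toL2_lap ht']
  ring

/-- The energy of the coupled system, whose increment over `[0,T]` controls the solution. -/
noncomputable def coupledEnergy (ρ C : ℝ) (u v : (Fin d → ℝ) → ℝ → ℝ) (t : ℝ) : ℝ :=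
  couplingWeight ρ * carlemanEnergy (carlemanRate ρ C) 1 u t +
    carlemanEnergy (carlemanRate ρ C) (-1) v t

/-- The constant of the weighted energy estimate on `[0,T]`. -/
noncomputable def energyConst (T ρ C : ℝ) : ℝ :=
  12 * exp (carlemanRate ρ C * T) * (1 + 2 * C ^ 2 + ρ ^ 2)

/-- The constant bounding `coupledEnergy` at the ends of `[0,T]` by the data. -/
noncomputable def boundaryConst (T ρ C : ℝ) : ℝ :=
  exp (2 * exp (carlemanRate ρ C * T)) *
    (couplingWeight ρ * (carlemanRate ρ C * exp (carlemanRate ρ C * T)))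

theorem energyConst_pos (T ρ C : ℝ) : 0 < energyConst T ρ C := by
  unfold energyConst
  positivity

theorem boundaryConst_pos (T ρ C : ℝ) : 0 < boundaryConst T ρ C := by
  have := one_le_couplingWeight ρ
  have := one_le_carlemanRate ρ C
  unfold boundaryConst
  positivity

variable {ρ C : ℝ}

theorem LinearizedMFGInequalities.exists_hasDerivAt_coupledEnergy
    (h : LinearizedMFGInequalities T ρ C u v) (ht : t ∈ Ioo 0 T) :
    ∃ D, HasDerivAt (coupledEnergy ρ C u v) D t ∧
      parabolicNormSq u t + parabolicNormSq v t ≤ energyConst T ρ C * D := by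
  have hT := ht.1.trans ht.2
  have ht' := Ioo_subset_Icc_self ht
  have hlam := zero_lt_one.trans_le (one_le_carlemanRate ρ C)
  have hφ : 1 ≤ exp (carlemanRate ρ C * t) := one_le_exp (mul_pos hlam ht.1).le
  have hφT : exp (carlemanRate ρ C * t) ≤ exp (carlemanRate ρ C * T) := by gcongr; exact ht.2.le
  have hpoint := (h.toL2 hT ht).graphNormSq_add_graphNormSq_le_carlemanForm hφ
  have hu' := h.left.hasDerivAt_carlemanEnergy hT (carlemanRate ρ C) 1 ht
  have hv' := h.right.hasDerivAt_carlemanEnergy hT (carlemanRate ρ C) (-1) ht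
  refine ⟨_, (hu'.const_mul (couplingWeight ρ)).add hv', ?_⟩
  rw [← h.left.parabolicNormSq_eq hT ht', ← h.right.parabolicNormSq_eq hT ht'] at hpoint
  simp only [one_smul, neg_one_smul, mul_left_comm (couplingWeight ρ), ← mul_add]
  have hform := (mul_nonneg_iff_of_pos_left (by positivity)).1
    ((add_nonneg (parabolicNormSq_nonneg u t) (parabolicNormSq_nonneg v t)).trans hpoint)
  calc _ ≤ _ := hpoint
    _ ≤ energyConst T ρ C * _ := by unfold energyConst; gcongr
    _ ≤ _ := by
      unfold energyConst
      gcongr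
      exact le_mul_of_one_le_left hform (one_le_exp (by positivity))

theorem LinearizedMFGInequalities.integral_parabolicNormSq_le
    (h : LinearizedMFGInequalities T ρ C u v) (hT : 0 < T) :
    (∫ t in Ioo 0 T, parabolicNormSq u t) + ∫ t in Ioo 0 T, parabolicNormSq v t ≤
      energyConst T ρ C * (coupledEnergy ρ C u v T - coupledEnergy ρ C u v 0) := by
  choose! D hD hle using fun t ht => h.exists_hasDerivAt_coupledEnergy (t := t) ht
  have hu := (h.left.continuousOn_parabolicNormSq hT).integrableOn_Icc (μ := volume)
  have hv := (h.right.continuousOn_parabolicNormSq hT).integrableOn_Icc (μ := volume)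
  have hcont : ContinuousOn (coupledEnergy ρ C u v) (Icc 0 T) :=
    ((h.left.continuousOn_carlemanEnergy _ _).const_mul _).add
      (h.right.continuousOn_carlemanEnergy _ _)
  rw [← integral_add (hu.mono_set Ioo_subset_Icc_self) (hv.mono_set Ioo_subset_Icc_self),
    ← integral_Ioc_eq_integral_Ioo, ← intervalIntegral.integral_of_le hT.le, mul_sub]
  exact intervalIntegral.integral_le_sub_of_hasDeriv_right_of_le hT.le (hcont.const_mul _)
    (fun t ht => ((hD t ht).const_mul _).hasDerivWithinAt) (hu.add hv) hle

theorem one_le_carlemanRate_mul_exp (ρ C : ℝ) (hT : 0 ≤ T) :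
    1 ≤ carlemanRate ρ C * exp (carlemanRate ρ C * T) := by
  have hlam := one_le_carlemanRate ρ C
  exact one_le_mul_of_one_le_of_one_le hlam (one_le_exp (by positivity))

theorem coupledEnergy_final_le (hu : Admissible T u) (hT : 0 ≤ T) :
    coupledEnergy ρ C u v T ≤ boundaryConst T ρ C *
      ((∫ x, (u x T ^ 2 + grad2 u x T)) + ∫ x, v x T ^ 2) := by
  rw [integral_add (hu.sq.integrable ⟨hT, le_rfl⟩) (hu.grad2.integrable ⟨hT, le_rfl⟩)]
  have hκ := one_le_couplingWeight ρ
  have hrate := one_le_carlemanRate_mul_exp ρ C hT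
  have hgradu := le_mul_of_one_le_left (integral_grad2_nonneg u T) hrate
  have hv := integral_sq_nonneg v T
  have hκv := le_mul_of_one_le_left (mul_nonneg (zero_le_one.trans hrate) hv) hκ
  have hgradv := integral_grad2_nonneg v T
  set κ := couplingWeight ρ
  set a := carlemanRate ρ C * exp (carlemanRate ρ C * T)
  calc coupledEnergy ρ C u v T
      = exp (2 * exp (carlemanRate ρ C * T)) *
          (κ * (a * (∫ x, u x T ^ 2) + ∫ x, grad2 u x T)
            + (a * (∫ x, v x T ^ 2) - ∫ x, grad2 v x T)) := by
        unfold coupledEnergy carlemanEnergy; ring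
    _ ≤ exp (2 * exp (carlemanRate ρ C * T)) *
          (κ * (a * (∫ x, u x T ^ 2) + a * ∫ x, grad2 u x T)
            + κ * (a * ∫ x, v x T ^ 2)) := by gcongr; linarith
    _ = _ := by unfold boundaryConst; ring

theorem neg_coupledEnergy_zero_le (hT : 0 ≤ T) :
    -coupledEnergy ρ C u v 0 ≤ boundaryConst T ρ C * ∫ x, grad2 v x 0 := by
  have hκ := one_le_couplingWeight ρ
  have hlam := one_le_carlemanRate ρ C
  have hκlam : 1 ≤ couplingWeight ρ * (carlemanRate ρ C * exp (carlemanRate ρ C * T)) :=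
    one_le_mul_of_one_le_of_one_le hκ (one_le_carlemanRate_mul_exp ρ C hT)
  have hgradu := integral_grad2_nonneg u 0
  have hgradv := integral_grad2_nonneg v 0
  have hrest : 0 ≤ exp (2 * exp (carlemanRate ρ C * 0)) *
      (couplingWeight ρ * (carlemanRate ρ C * exp (carlemanRate ρ C * 0) * (∫ x, u x 0 ^ 2)
          + ∫ x, grad2 u x 0)
        + carlemanRate ρ C * exp (carlemanRate ρ C * 0) * ∫ x, v x 0 ^ 2) := by positivity
  calc -coupledEnergy ρ C u v 0
      ≤ exp (2 * exp (carlemanRate ρ C * 0)) * ∫ x, grad2 v x 0 := by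
        unfold coupledEnergy carlemanEnergy; linarith
    _ ≤ exp (2 * exp (carlemanRate ρ C * T)) * ∫ x, grad2 v x 0 := by gcongr
    _ ≤ boundaryConst T ρ C * ∫ x, grad2 v x 0 := by
        unfold boundaryConst
        gcongr
        exact le_mul_of_one_le_right (exp_pos _).le hκlam

end Stability

/-- Global Lipschitz stability for the backward problem of the linearized mean
field game system, by the data `u(·,T)` in `H¹`, `∇v(·,0)` in `L²` and `v(·,T)`
in `L²`. -/
theorem global_lipschitz_stability_mfg
    (d : ℕ) (hd : 1 ≤ d) (T : ℝ) (hT : 0 < T) (ρ₀ C₀ : ℝ) (hC₀ : 0 < C₀) :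
    ∃ C > (0:ℝ),
      ∀ u v : (Fin d → ℝ) → ℝ → ℝ, Admissible T u → Admissible T v →
      (∀ x : Fin d → ℝ, ∀ t ∈ Set.Ioo (0:ℝ) T,
        |tder u x t + lap u x t| ≤ C₀ * (|u x t| + gradNorm u x t + |v x t|)) →
      (∀ x : Fin d → ℝ, ∀ t ∈ Set.Ioo (0:ℝ) T,
        |tder v x t - lap v x t - ρ₀ * lap u x t| ≤
          C₀ * (|u x t| + |v x t| + gradNorm u x t + gradNorm v x t)) →
      Real.sqrt (∫ t in Set.Ioo (0:ℝ) T, ∫ x : Fin d → ℝ,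
          ((u x t) ^ 2 + grad2 u x t + hess2 u x t + (tder u x t) ^ 2))
      + Real.sqrt (∫ t in Set.Ioo (0:ℝ) T, ∫ x : Fin d → ℝ,
          ((v x t) ^ 2 + grad2 v x t + hess2 v x t + (tder v x t) ^ 2))
      ≤ C * (Real.sqrt (∫ x : Fin d → ℝ, ((u x T) ^ 2 + grad2 u x T))
          + Real.sqrt (∫ x : Fin d → ℝ, grad2 v x 0)
          + Real.sqrt (∫ x : Fin d → ℝ, (v x T) ^ 2)) := by
  set A := energyConst T ρ₀ C₀ * boundaryConst T ρ₀ C₀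
  have hA : 0 < A := mul_pos (energyConst_pos T ρ₀ C₀) (boundaryConst_pos T ρ₀ C₀)
  refine ⟨2 * √A, by positivity, fun u v hu hv hbackward hforward => ?_⟩
  have h : LinearizedMFGInequalities T ρ₀ C₀ u v := ⟨hu, hv, hbackward, hforward⟩
  refine sqrt_add_sqrt_le (integral_nonneg fun t => parabolicNormSq_nonneg u t)
    (integral_nonneg fun t => parabolicNormSq_nonneg v t) hA.le ?_
  calc (∫ t in Ioo 0 T, parabolicNormSq u t) + ∫ t in Ioo 0 T, parabolicNormSq v t
      ≤ energyConst T ρ₀ C₀ * (coupledEnergy ρ₀ C₀ u v T - coupledEnergy ρ₀ C₀ u v 0) :=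
        h.integral_parabolicNormSq_le hT
    _ ≤ energyConst T ρ₀ C₀ * (boundaryConst T ρ₀ C₀ *
          ((∫ x, (u x T ^ 2 + grad2 u x T)) + ∫ x, v x T ^ 2)
        + boundaryConst T ρ₀ C₀ * ∫ x, grad2 v x 0) := by
        gcongr
        · exact (energyConst_pos T ρ₀ C₀).le
        · linarith [coupledEnergy_final_le (ρ := ρ₀) (C := C₀) (v := v) hu hT.le,
            neg_coupledEnergy_zero_le (ρ := ρ₀) (C := C₀) (u := u) (v := v) hT.le]
    _ = A * ((∫ x, (u x T ^ 2 + grad2 u x T)) + (∫ x, grad2 v x 0) + ∫ x, v x T ^ 2) := by ring
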